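/- Assume CH. Let I be a σ-ideal on ℝ satisfying the standing assumptions (ℝ ∉ I, translation invariance, scale invariance, Borel base, Steinhaus property). Then there exists an I-Luzin set L ⊆ ℝ such that the ℚ-linear span of L (the set of all finite linear combinations of elements of L with rational coefficients, viewed as a subset of ℝ) is an I-Luzin set. -/

import Mathlib

open Cardinal MeasureTheory Set
open scoped Pointwise

/-- `I` is a σ-ideal on `ℝ`. -/
def IsSigmaIdeal (I : Set (Set ℝ)) : Prop :=
  ∅ ∈ I ∧ (∀ A B : Set ℝ, A ⊆ B → B ∈ I → A ∈ I) ∧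
    ∀ f : ℕ → Set ℝ, (∀ n, f n ∈ I) → (⋃ n, f n) ∈ I

/-- The standing assumptions on the σ-ideal `I`: nontriviality, translation and scale
invariance, Borel base and the Steinhaus property. -/
def StandingIdeal (I : Set (Set ℝ)) : Prop :=
  IsSigmaIdeal I ∧
  Set.univ ∉ I ∧
  (∀ x : ℝ, ∀ S ∈ I, (fun y => x + y) '' S ∈ I) ∧
  (∀ x : ℝ, ∀ S ∈ I, (fun y => x * y) '' S ∈ I) ∧
  (∀ S ∈ I, ∃ B ∈ I, MeasurableSet B ∧ S ⊆ B) ∧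
  (∀ A B : Set ℝ, MeasurableSet A → MeasurableSet B → A ∉ I → B ∉ I →
    (interior (A - B)).Nonempty)

/-- `L` is an `I`-Luzin set. -/
def IsLuzinFor (I : Set (Set ℝ)) (L : Set ℝ) : Prop :=
  Cardinal.mk L = Cardinal.continuum ∧ ∀ S ∈ I, (L ∩ S).Countable

/-- `L` is a strong `I`-Luzin set. -/
def IsStrongLuzinFor (I : Set (Set ℝ)) (L : Set ℝ) : Prop :=
  IsLuzinFor I L ∧ ∀ B : Set ℝ, MeasurableSet B → B ∉ I → ¬ (L ∩ B).Countable

/-- `L` is a Luzin set. -/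
def IsLuzin (L : Set ℝ) : Prop :=
  Cardinal.mk L = Cardinal.continuum ∧ ∀ M : Set ℝ, IsMeagre M → (L ∩ M).Countable

/-- `L` is a strong Luzin set. -/
def IsStrongLuzin (L : Set ℝ) : Prop :=
  IsLuzin L ∧ ∀ B : Set ℝ, MeasurableSet B → ¬ IsMeagre B → ¬ (L ∩ B).Countable

/-- `S` is a Sierpiński set. -/
def IsSierpinski (S : Set ℝ) : Prop :=
  Cardinal.mk S = Cardinal.continuum ∧ ∀ N : Set ℝ, volume N = 0 → (S ∩ N).Countable

/-- `S` is a strong Sierpiński set. -/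
def IsStrongSierpinski (S : Set ℝ) : Prop :=
  IsSierpinski S ∧ ∀ B : Set ℝ, MeasurableSet B → 0 < volume B → ¬ (S ∩ B).Countable

/-- `X` is a Bernstein set. -/
def IsBernstein (X : Set ℝ) : Prop :=
  ∀ P : Set ℝ, Perfect P → P.Nonempty → (P ∩ X).Nonempty ∧ (P ∩ Xᶜ).Nonempty

/-- `A ⊆ ℝ²` is completely `𝓜`-nonmeasurable. -/
def CompletelyMeagerNonmeasurable (A : Set (ℝ × ℝ)) : Prop :=
  ∀ B : Set (ℝ × ℝ), MeasurableSet B → ¬ IsMeagre B → (A ∩ B).Nonempty ∧ ¬ B ⊆ A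

/-- `A ⊆ ℝ²` is completely `𝓝`-nonmeasurable. -/
def CompletelyNullNonmeasurable (A : Set (ℝ × ℝ)) : Prop :=
  ∀ B : Set (ℝ × ℝ), MeasurableSet B → 0 < volume B → (A ∩ B).Nonempty ∧ ¬ B ⊆ A

/-- `n`-fold Minkowski sum (with `nFoldSum A 0 = {0}`). -/
def nFoldSum (A : Set ℝ) : ℕ → Set ℝ
  | 0 => {0}
  | n + 1 => nFoldSum A n + A

/-!
The complements of the members of `I` form a filter with the countable intersection property, and
under CH the Borel base gives it a basis `(B a)` indexed by `ω₁`. Choose reals `x a` by transfinite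
recursion on `a < ω₁` so that `x a` avoids the countable span of the earlier terms and every
`q * x a + y`, with `q` a nonzero rational and `y` in that span, lies in `B i` for all `i ≤ a`.
These are countably many conditions on `x a`, each of which holds on a set of the filter: the first
kind because singletons belong to `I` (unless `I = {∅}`, when `ℝ` itself is a Luzin set), the second
by invariance. A nonzero element of the span of all terms has the form `q * x b + y` with `b` its
largest index; if it is not in `B a`, then `b < a`, so it lies in the countable span of the terms
`x c` with `c < a`.
-/

open Filter Submodule

universe u

theorem exists_forall_restrict_Iio {ι α : Type*} [Preorder ι] [WellFoundedLT ι]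
    {P : ∀ a : ι, (Iio a → α) → α → Prop} (hP : ∀ a f, ∃ y, P a f y) :
    ∃ x : ι → α, ∀ a, P a (fun b => x b) (x a) := by
  choose next hnext using hP
  let x : ι → α := (wellFounded_lt (α := ι)).fix fun a earlier => next a fun b => earlier b b.2
  have hx : ∀ a, x a = next a fun b => x b := (wellFounded_lt (α := ι)).fix_eq _
  exact ⟨x, fun a => hx a ▸ hnext a _⟩

theorem eventually_notMem_of_countable {α : Type*} {l : Filter α} [CountableInterFilter l]
    (hl : l ≤ cofinite) {s : Set α} (hs : s.Countable) : ∀ᶠ x in l, x ∉ s := by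
  have : ∀ᶠ x in l, ∀ y ∈ s, x ≠ y :=
    (eventually_countable_ball hs).mpr fun y _ => le_cofinite_iff_eventually_ne.mp hl y
  exact this.mono fun x hx hxs => hx x hxs rfl

section Span

variable {R V : Type*} [Semiring R] [AddCommMonoid V] [Module R V]

theorem countable_span [Countable R] {s : Set V} (hs : s.Countable) :
    (span R s : Set V).Countable := by
  have := hs.to_subtype
  have : Countable (span R (range ((↑) : s → V))) := inferInstance
  rwa [Subtype.range_coe] at this

theorem eventually_forall_smul_add_mem [Countable R] {ι : Type*} {F : Filter V}
    [CountableInterFilter F] (hadd : ∀ v : V, Tendsto (v + ·) F F)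
    (hsmul : ∀ c : R, c ≠ 0 → Tendsto (c • ·) F F) {B : ι → Set V} (hB : ∀ i, B i ∈ F)
    {J : Set ι} (hJ : J.Countable) {C : Set V} (hC : C.Countable) :
    ∀ᶠ x in F, ∀ i ∈ J, ∀ c : R, c ≠ 0 → ∀ y ∈ C, c • x + y ∈ B i := by
  refine (eventually_countable_ball hJ).mpr fun i _ => eventually_countable_forall.mpr fun c =>
    eventually_imp_distrib_left.mpr fun hc => (eventually_countable_ball hC).mpr fun y _ => ?_
  simpa only [Function.comp_apply, add_comm y] using
    ((hadd y).comp (hsmul c hc)).eventually_mem (hB i)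

variable {ι : Type*} [LinearOrder ι]

theorem eq_zero_or_exists_eq_smul_add_of_mem_span_range {x : ι → V} {z : V}
    (hz : z ∈ span R (range x)) :
    z = 0 ∨ ∃ b, ∃ c : R, c ≠ 0 ∧ ∃ y ∈ span R (x '' Iio b), z = c • x b + y := by
  rw [← Finsupp.range_linearCombination] at hz
  obtain ⟨f, rfl⟩ := hz
  induction f using Finsupp.induction_on_max with
  | zero => exact .inl (map_zero _)
  | single_add b c f hf hc _ =>
    have hy : Finsupp.linearCombination R x f ∈ span R (x '' Iio b) :=
      Finsupp.mem_span_image_iff_linearCombination R |>.mpr ⟨f, hf, rfl⟩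
    exact .inr ⟨b, c, hc, _, hy, by rw [map_add, Finsupp.linearCombination_single]⟩

/-- A family `x` is span-generic for `B` if each term is new, that is, outside the span of the
earlier ones, and every vector of the span of `x '' Iic a` with nonzero leading coefficient at `a`
lies in `B i` for all `i ≤ a`. When `B` is a basis of the filter dual to a σ-ideal, this is what
makes the span of `x` a Luzin set. -/
def IsSpanGeneric (R : Type*) [Semiring R] [Module R V] (B : ι → Set V) (x : ι → V) : Prop :=
  ∀ a, x a ∉ span R (x '' Iio a) ∧
    ∀ i ≤ a, ∀ c : R, c ≠ 0 → ∀ y ∈ span R (x '' Iio a), c • x a + y ∈ B i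

namespace IsSpanGeneric

variable {B : ι → Set V} {x : ι → V}

theorem injective (hx : IsSpanGeneric R B x) : Function.Injective x :=
  .of_lt_imp_ne fun _ b hab heq => (hx b).1 (heq ▸ subset_span (mem_image_of_mem x hab))

theorem span_range_sdiff_subset (hx : IsSpanGeneric R B x) (a : ι) :
    (span R (range x) : Set V) \ B a ⊆ span R (x '' Iio a) := by
  rintro z ⟨hz, hzB⟩
  rcases eq_zero_or_exists_eq_smul_add_of_mem_span_range hz with rfl | ⟨b, c, hc, y, hy, rfl⟩
  · exact zero_mem _
  · have hba : b < a := lt_of_not_ge fun hab => hzB ((hx b).2 a hab c hc y hy)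
    exact add_mem (smul_mem _ c (subset_span (mem_image_of_mem x hba)))
      (span_mono (image_mono (Iio_subset_Iio hba.le)) hy)

end IsSpanGeneric

theorem exists_isSpanGeneric [Countable R] [WellFoundedLT ι] (hι : ∀ a : ι, (Iio a).Countable)
    {F : Filter V} [CountableInterFilter F] [F.NeBot] (hF : F ≤ cofinite)
    (hadd : ∀ v : V, Tendsto (v + ·) F F) (hsmul : ∀ c : R, c ≠ 0 → Tendsto (c • ·) F F)
    {B : ι → Set V} (hB : ∀ i, B i ∈ F) :
    ∃ x : ι → V, IsSpanGeneric R B x := by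
  have hnext (a : ι) (f : Iio a → V) : ∃ v, v ∉ span R (range f) ∧
      ∀ i ∈ Iic a, ∀ c : R, c ≠ 0 → ∀ y ∈ span R (range f), c • v + y ∈ B i := by
    have := (hι a).to_subtype
    have hspan := countable_span (R := R) (countable_range f)
    have hIic : (Iic a).Countable := Iio_insert (a := a) ▸ (hι a).insert a
    exact ((eventually_notMem_of_countable hF hspan).and
      (eventually_forall_smul_add_mem hadd hsmul hB hIic hspan)).exists
  simpa only [IsSpanGeneric, image_eq_range, mem_Iic] using exists_forall_restrict_Iio hnext

end Span

theorem countable_Iio_toType_ord_aleph_one (a : (aleph.{u} 1).ord.ToType) : (Iio a).Countable := by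
  rw [← le_aleph0_iff_set_countable, ← lt_aleph_one_iff]
  exact (mk_Iio_lt a (by rw [mk_ord_toType, Ordinal.type_toType])).trans_eq (mk_ord_toType _)

theorem exists_mk_eq_aleph_one_forall_countable_span_sdiff {R : Type*} {V κ : Type u} [Semiring R]
    [Countable R] [AddCommMonoid V] [Module R V] {F : Filter V} [CountableInterFilter F] [F.NeBot]
    (hF : F ≤ cofinite) (hadd : ∀ v : V, Tendsto (v + ·) F F)
    (hsmul : ∀ c : R, c ≠ 0 → Tendsto (c • ·) F F) {p : κ → Prop} {s : κ → Set V}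
    (hbasis : F.HasBasis p s) (hκ : #κ ≤ ℵ₁) :
    ∃ L : Set V, #L = ℵ₁ ∧ ∀ t ∈ F, ((span R L : Set V) \ t).Countable := by
  let ι := (aleph.{u} 1).ord.ToType
  have hι : #ι = ℵ₁ := mk_ord_toType _
  obtain ⟨e, he⟩ : ∃ e : ι → {k // p k}, Function.Surjective e :=
    Function.exists_surjective_iff.mpr
      ⟨hbasis.ex_mem.elim fun k hk => ⟨fun _ => ⟨k, hk⟩⟩, (mk_subtype_le p).trans (hκ.trans hι.ge)⟩
  obtain ⟨x, hx⟩ := exists_isSpanGeneric (R := R) countable_Iio_toType_ord_aleph_one hF hadd hsmul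
    (B := fun a => s (e a)) fun a => hbasis.mem_of_mem (e a).2
  refine ⟨range x, (mk_range_eq x hx.injective).trans hι, fun t ht => ?_⟩
  obtain ⟨k, hk, hkt⟩ := hbasis.mem_iff.mp ht
  obtain ⟨a, ha⟩ := he ⟨k, hk⟩
  have hat : s (e a) ⊆ t := ha ▸ hkt
  exact (countable_span ((countable_Iio_toType_ord_aleph_one a).image x)).mono
    ((sdiff_subset_sdiff_right hat).trans (hx.span_range_sdiff_subset a))

theorem mk_measurableSet_le_continuum (α : Type*) [MeasurableSpace α]
    [MeasurableSpace.CountablyGenerated α] : #{s : Set α // MeasurableSet s} ≤ 𝔠 := by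
  have hgen : #(MeasurableSpace.countableGeneratingSet α) ≤ 𝔠 :=
    MeasurableSpace.countable_countableGeneratingSet.le_aleph0.trans aleph0_le_continuum
  have h := MeasurableSpace.cardinal_measurableSet_le_continuum hgen
  rwa [MeasurableSpace.generateFrom_countableGeneratingSet] at h

theorem IsLuzinFor.subset {I : Set (Set ℝ)} {L M : Set ℝ} (hM : IsLuzinFor I M) (hLM : L ⊆ M)
    (hL : #L = 𝔠) : IsLuzinFor I L :=
  ⟨hL, fun S hS => (hM.2 S hS).mono (inter_subset_inter_left S hLM)⟩

namespace IsSigmaIdeal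

variable {I : Set (Set ℝ)}

theorem sUnion_mem (hI : IsSigmaIdeal I) {𝒮 : Set (Set ℝ)} (hc : 𝒮.Countable)
    (h𝒮 : ∀ S ∈ 𝒮, S ∈ I) : ⋃₀ 𝒮 ∈ I := by
  rcases 𝒮.eq_empty_or_nonempty with rfl | hne
  · exact (sUnion_empty (α := ℝ)).symm ▸ hI.1
  · obtain ⟨f, rfl⟩ := hc.exists_eq_range hne
    exact sUnion_range f ▸ hI.2.2 f fun n => h𝒮 _ (mem_range_self n)

/-- The dual filter of a σ-ideal: the filter of complements of its members. -/
def dualFilter (hI : IsSigmaIdeal I) : Filter ℝ :=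
  .ofCountableUnion I (fun _ => hI.sUnion_mem) fun T hT S hST => hI.2.1 S T hST hT

instance (hI : IsSigmaIdeal I) : CountableInterFilter hI.dualFilter :=
  countableInter_ofCountableUnion ..

theorem compl_mem_dualFilter (hI : IsSigmaIdeal I) {S : Set ℝ} : Sᶜ ∈ hI.dualFilter ↔ S ∈ I := by
  rw [dualFilter, mem_ofCountableUnion, compl_compl]

theorem neBot_dualFilter (hI : IsSigmaIdeal I) (huniv : Set.univ ∉ I) : hI.dualFilter.NeBot :=
  neBot_iff.mpr fun h => huniv <| hI.compl_mem_dualFilter.mp <| by simp [h]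

theorem dualFilter_le_cofinite (hI : IsSigmaIdeal I) (hsing : ∀ x, {x} ∈ I) :
    hI.dualFilter ≤ cofinite :=
  le_cofinite_iff_compl_singleton_mem.mpr fun x => hI.compl_mem_dualFilter.mpr (hsing x)

theorem tendsto_dualFilter (hI : IsSigmaIdeal I) {f : ℝ → ℝ} (hf : ∀ S ∈ I, f ⁻¹' S ∈ I) :
    Tendsto f hI.dualFilter hI.dualFilter := by
  intro S hS
  rw [mem_map, ← compl_compl (f ⁻¹' S), hI.compl_mem_dualFilter, ← preimage_compl]
  exact hf Sᶜ hS

theorem tendsto_add_dualFilter (hI : IsSigmaIdeal I)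
    (hadd : ∀ x : ℝ, ∀ S ∈ I, (fun y => x + y) '' S ∈ I) (v : ℝ) :
    Tendsto (v + ·) hI.dualFilter hI.dualFilter :=
  hI.tendsto_dualFilter fun S hS => by simpa using hadd (-v) S hS

theorem tendsto_smul_dualFilter (hI : IsSigmaIdeal I)
    (hmul : ∀ q : ℚ, ∀ S ∈ I, (fun y => (q : ℝ) * y) '' S ∈ I) {q : ℚ} (hq : q ≠ 0) :
    Tendsto (fun y : ℝ => q • y) hI.dualFilter hI.dualFilter := by
  refine hI.tendsto_dualFilter fun S hS => ?_
  rw [preimage_smul₀ hq, ← image_smul]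
  simpa only [Rat.smul_def] using hmul q⁻¹ S hS

theorem hasBasis_dualFilter (hI : IsSigmaIdeal I)
    (hborel : ∀ S ∈ I, ∃ B ∈ I, MeasurableSet B ∧ S ⊆ B) :
    hI.dualFilter.HasBasis (fun B : {B : Set ℝ // MeasurableSet B} => B.1 ∈ I) (·.1ᶜ) := by
  refine ⟨fun T => ⟨fun hT => ?_, fun ⟨B, hB, hBT⟩ => ?_⟩⟩
  · obtain ⟨B, hB, hBm, hTB⟩ := hborel Tᶜ hT
    exact ⟨⟨B, hBm⟩, hB, compl_subset_comm.mp hTB⟩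
  · exact mem_of_superset (hI.compl_mem_dualFilter.mpr hB) hBT

theorem singleton_mem (hI : IsSigmaIdeal I)
    (hadd : ∀ x : ℝ, ∀ S ∈ I, (fun y => x + y) '' S ∈ I) {S : Set ℝ} (hS : S ∈ I)
    (hne : S.Nonempty) (x : ℝ) : {x} ∈ I := by
  obtain ⟨s, hs⟩ := hne
  simpa using hadd (x - s) {s} (hI.2.1 _ S (singleton_subset_iff.mpr hs) hS)

end IsSigmaIdeal

theorem isLuzinFor_univ {I : Set (Set ℝ)} (hI : ∀ S ∈ I, S = ∅) : IsLuzinFor I univ :=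
  ⟨mk_univ_real, fun S hS => hI S hS ▸ (countable_empty.mono inter_subset_right)⟩

theorem stmt_14_general (hCH : Cardinal.continuum = Cardinal.aleph 1) {I : Set (Set ℝ)}
    (hI : IsSigmaIdeal I) (huniv : Set.univ ∉ I)
    (hadd : ∀ x : ℝ, ∀ S ∈ I, (fun y => x + y) '' S ∈ I)
    (hmul : ∀ q : ℚ, ∀ S ∈ I, (fun y => (q : ℝ) * y) '' S ∈ I)
    (hborel : ∀ S ∈ I, ∃ B ∈ I, MeasurableSet B ∧ S ⊆ B) :
    ∃ L : Set ℝ, IsLuzinFor I L ∧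
      IsLuzinFor I ((Submodule.span ℚ L : Submodule ℚ ℝ) : Set ℝ) := by
  have hCH₀ : continuum.{0} = aleph.{0} 1 := lift_inj.mp (by simpa using hCH)
  by_cases hempty : ∀ S ∈ I, S = ∅
  · have hL := isLuzinFor_univ hempty
    exact ⟨univ, hL, by rwa [span_univ, top_coe]⟩
  push Not at hempty
  obtain ⟨S₀, hS₀, hne⟩ := hempty
  have := hI.neBot_dualFilter huniv
  obtain ⟨L, hL, hspan⟩ := exists_mk_eq_aleph_one_forall_countable_span_sdiff (R := ℚ)
    (hI.dualFilter_le_cofinite (hI.singleton_mem hadd hS₀ hne))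
    (hI.tendsto_add_dualFilter hadd) (fun _ => hI.tendsto_smul_dualFilter hmul)
    (hI.hasBasis_dualFilter hborel) ((mk_measurableSet_le_continuum ℝ).trans hCH₀.le)
  rw [← hCH₀] at hL
  have hspanL : IsLuzinFor I (span ℚ L) := by
    refine ⟨((mk_set_le _).trans mk_real.le).antisymm (hL ▸ mk_le_mk_of_subset subset_span), ?_⟩
    exact fun S hS => by simpa [sdiff_eq] using hspan Sᶜ (hI.compl_mem_dualFilter.mpr hS)
  exact ⟨L, hspanL.subset subset_span hL, hspanL⟩

theorem stmt_14 (hCH : Cardinal.continuum = Cardinal.aleph 1)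
    (I : Set (Set ℝ)) (hI : StandingIdeal I) :
    ∃ L : Set ℝ, IsLuzinFor I L ∧
      IsLuzinFor I ((Submodule.span ℚ L : Submodule ℚ ℝ) : Set ℝ) := by
  obtain ⟨hσ, huniv, hadd, hmul, hborel, -⟩ := hI
  exact stmt_14_general hCH hσ huniv hadd (fun q => hmul q) hborel
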